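/- Let ι = (i_1,…,i_N) be a reduced word for the longest element of the Weyl group of A, and let Ξ be a finite set of linear forms on ℤ^N, each of the form φ(x) = x_{k_φ} − ∑_{j : j^{(+)} ≤ N} c^{(φ)}_j β_j(x) for some index 1 ≤ k_φ ≤ N and integers c^{(φ)}_j. Set B_Ξ = {x ∈ ℤ^N : φ(x) ≥ 0 for all φ ∈ Ξ}. Then ℤ^N = ⋃_{H ∈ ℋ_ι} (H + B_Ξ); that is, every x ∈ ℤ^N can be written as x = H + y with H ∈ ℋ_ι and y ∈ B_Ξ. -/

import Mathlib

/-!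
STATEMENT 6: Let ι be a reduced word for the longest element of the Weyl group of
A and Ξ a finite set of linear forms on ℤ^N of the form
φ(x) = x_{k_φ} − ∑_{j : j⁺ ≤ N} c^{(φ)}_j β_j(x). Set
B_Ξ = {x ∈ ℤ^N : φ(x) ≥ 0 ∀φ ∈ Ξ}. Then ℤ^N = ⋃_{H ∈ ℋ_ι} (H + B_Ξ).
-/
/-- The simple reflection `s_i` of the Cartan matrix `a`, acting on the root
lattice (tensored with `ℚ`), `s_i(α_j) = α_j - a_{ij} α_i`. -/
def sRefl {n : ℕ} (a : Fin n → Fin n → ℤ) (i : Fin n) : (Fin n → ℚ) → (Fin n → ℚ) :=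
  fun v => v - (∑ j, (a i j : ℚ) * v j) • (Pi.single i 1 : Fin n → ℚ)

/-- The product `s_{i_1} s_{i_2} ⋯ s_{i_k}` of simple reflections along a word. -/
def wProd {n : ℕ} (a : Fin n → Fin n → ℤ) (l : List (Fin n)) : (Fin n → ℚ) → (Fin n → ℚ) :=
  (l.map (sRefl a)).foldr (· ∘ ·) id

/-- An `n×n` Cartan matrix of a finite-dimensional complex simple Lie algebra:
an indecomposable generalized Cartan matrix whose Weyl group is finite. -/
structure SimpleCartanMatrix (n : ℕ) where
  a : Fin n → Fin n → ℤ
  npos : 0 < n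
  diag : ∀ i, a i i = 2
  offdiag_nonpos : ∀ i j, i ≠ j → a i j ≤ 0
  zero_symm : ∀ i j, a i j = 0 → a j i = 0
  indecomposable : ∀ S : Set (Fin n), (∀ i ∈ S, ∀ j, j ∉ S → a i j = 0) → S = ∅ ∨ S = Set.univ
  finiteWeyl : Set.Finite {w : (Fin n → ℚ) → (Fin n → ℚ) | ∃ l : List (Fin n), w = wProd a l}

/-- A word is reduced if it has minimal length among all words representing the
same Weyl group element. -/
def IsReducedList {n : ℕ} (a : Fin n → Fin n → ℤ) (l : List (Fin n)) : Prop :=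
  ∀ l' : List (Fin n), wProd a l' = wProd a l → l.length ≤ l'.length

/-- A word is a reduced word for the longest element of the Weyl group iff it is
reduced and of maximal length among all reduced words. -/
def IsLongestWord {n : ℕ} (a : Fin n → Fin n → ℤ) (l : List (Fin n)) : Prop :=
  IsReducedList a l ∧ ∀ l' : List (Fin n), IsReducedList a l' → l'.length ≤ l.length

/-- The linear form `β_k(x) = x_k + ∑_{k<j<k⁺} a_{i_k,i_j} x_j + x_{k⁺}`, where
`k⁺` is the first index after `k` carrying the same letter as `i_k`
(junk value `0` if `k⁺` does not exist). -/
def betaFn {n N : ℕ} (a : Fin n → Fin n → ℤ) (ι : Fin N → Fin n) (k : Fin N)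
    (x : Fin N → ℤ) : ℤ :=
  if h : (Finset.univ.filter (fun l => k < l ∧ ι l = ι k)).Nonempty then
    x k + (∑ j ∈ Finset.univ.filter
        (fun j => k < j ∧ j < (Finset.univ.filter (fun l => k < l ∧ ι l = ι k)).min' h),
        a (ι k) (ι j) * x j)
      + x ((Finset.univ.filter (fun l => k < l ∧ ι l = ι k)).min' h)
  else 0

/-- The set `ℋ_ι = {x ∈ ℤ^N : β_k(x) = 0 for every k such that k⁺ ≤ N}`. -/
def Hset {n N : ℕ} (a : Fin n → Fin n → ℤ) (ι : Fin N → Fin n) : Set (Fin N → ℤ) :=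
  {x | ∀ k : Fin N, (∃ l, k < l ∧ ι l = ι k) → betaFn a ι k x = 0}

/-- The linear form `φ(x) = x_{k_φ} - ∑_{j : j⁺ ≤ N} c_j β_j(x)` attached to the
data `(k_φ, c)`. -/
def xiForm {n N : ℕ} (a : Fin n → Fin n → ℤ) (ι : Fin N → Fin n)
    (kphi : Fin N) (c : Fin N → ℤ) (x : Fin N → ℤ) : ℤ :=
  x kphi - ∑ j ∈ Finset.univ.filter (fun j => ∃ l, j < l ∧ ι l = ι j),
    c j * betaFn a ι j x


/-- The pairing of the `i`-th simple coroot with `v`. -/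
def prc {n : ℕ} (a : Fin n → Fin n → ℤ) (i : Fin n) (v : Fin n → ℚ) : ℚ :=
  ∑ j, (a i j : ℚ) * v j

/-- The `i`-th simple root. -/
def sroot {n : ℕ} (i : Fin n) : Fin n → ℚ := Pi.single i 1

lemma sRefl_eq {n : ℕ} (a : Fin n → Fin n → ℤ) (i : Fin n) (v : Fin n → ℚ) :
    sRefl a i v = v - prc a i v • sroot i := rfl

lemma prc_sub_smul {n : ℕ} (a : Fin n → Fin n → ℤ) (i : Fin n) (v u : Fin n → ℚ) (c : ℚ) :
    prc a i (v - c • u) = prc a i v - c * prc a i u := by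
  simp only [prc, Pi.sub_apply, Pi.smul_apply, smul_eq_mul, Finset.mul_sum,
    ← Finset.sum_sub_distrib]
  exact Finset.sum_congr rfl fun _ _ => by ring

lemma prc_sroot {n : ℕ} (a : Fin n → Fin n → ℤ) (i j : Fin n) :
    prc a i (sroot j) = a i j := by
  simp [prc, sroot, Pi.single_apply]

lemma sRefl_sub_smul {n : ℕ} (a : Fin n → Fin n → ℤ) (i : Fin n) (v u : Fin n → ℚ) (c : ℚ) :
    sRefl a i (v - c • u) = sRefl a i v - c • sRefl a i u := by
  simp only [sRefl_eq, prc_sub_smul]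
  module

lemma wProd_cons {n : ℕ} (a : Fin n → Fin n → ℤ) (i : Fin n) (l : List (Fin n)) :
    wProd a (i :: l) = sRefl a i ∘ wProd a l := rfl

lemma wProd_cons_same {n : ℕ} (a : Fin n → Fin n → ℤ) (i : Fin n) (l : List (Fin n))
    (v : Fin n → ℚ) : wProd a (i :: l) v i = wProd a l v i - prc a i (wProd a l v) := by
  simp [wProd_cons, sRefl_eq, sroot]

lemma wProd_cons_other {n : ℕ} (a : Fin n → Fin n → ℤ) (i k : Fin n) (h : k ≠ i)
    (l : List (Fin n)) (v : Fin n → ℚ) : wProd a (i :: l) v k = wProd a l v k := by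
  simp [wProd_cons, sRefl_eq, sroot, h]

lemma wProd_append {n : ℕ} (a : Fin n → Fin n → ℤ) (l l' : List (Fin n)) :
    wProd a (l ++ l') = wProd a l ∘ wProd a l' := by
  induction l with
  | nil => rfl
  | cons i l ih => rw [List.cons_append, wProd_cons, wProd_cons, ih]; rfl

lemma wProd_sub_smul {n : ℕ} (a : Fin n → Fin n → ℤ) (l : List (Fin n)) (v u : Fin n → ℚ)
    (c : ℚ) : wProd a l (v - c • u) = wProd a l v - c • wProd a l u := by
  induction l with
  | nil => rfl
  | cons i l ih => simp only [wProd_cons, Function.comp_apply, ih, sRefl_sub_smul]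

lemma sRefl_sRefl {n : ℕ} (C : SimpleCartanMatrix n) (i : Fin n) (v : Fin n → ℚ) :
    sRefl C.a i (sRefl C.a i v) = v := by
  have h := C.diag i
  simp only [sRefl_eq, prc_sub_smul, prc_sroot, h]
  push_cast
  module

/-- Existence of an invariant positive definite form. -/
lemma exists_form {n : ℕ} (C : SimpleCartanMatrix n) :
    ∃ B : (Fin n → ℚ) → (Fin n → ℚ) → ℚ,
      (∀ u v, B u v = B v u) ∧ (∀ v u x c, B (v - c • u) x = B v x - c * B u x) ∧
      (∀ i u v, B (sRefl C.a i u) (sRefl C.a i v) = B u v) ∧ (∀ v, 0 ≤ B v v) ∧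
      (∀ v, B v v = 0 → v = 0) := by
  classical
  set W := C.finiteWeyl.toFinset with hW
  have hmem : ∀ w, w ∈ W ↔ ∃ l, w = wProd C.a l := by
    intro w; simp [hW]
  refine ⟨fun u v => ∑ w ∈ W, ∑ k, w u k * w v k, ?_, ?_, ?_, ?_, ?_⟩
  · intro u v
    exact Finset.sum_congr rfl fun w _ => Finset.sum_congr rfl fun k _ => mul_comm _ _
  · intro v u x c
    simp only [Finset.mul_sum, ← Finset.sum_sub_distrib]
    refine Finset.sum_congr rfl fun w hw => ?_
    obtain ⟨l, rfl⟩ := (hmem w).1 hw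
    refine Finset.sum_congr rfl fun k _ => ?_
    rw [wProd_sub_smul]
    simp only [Pi.sub_apply, Pi.smul_apply, smul_eq_mul]
    ring
  · intro i u v
    have key : ∀ w ∈ W, w ∘ sRefl C.a i ∈ W := by
      intro w hw
      obtain ⟨l, rfl⟩ := (hmem w).1 hw
      exact (hmem _).2 ⟨l ++ [i], by rw [wProd_append]; rfl⟩
    have inv : ∀ w : (Fin n → ℚ) → (Fin n → ℚ), (w ∘ sRefl C.a i) ∘ sRefl C.a i = w := by
      intro w; funext x; simp [sRefl_sRefl]
    exact Finset.sum_bij' (fun w _ => w ∘ sRefl C.a i) (fun w _ => w ∘ sRefl C.a i)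
      key key (fun w _ => inv w) (fun w _ => inv w) (fun w _ => rfl)
  · intro v
    exact Finset.sum_nonneg fun w _ => Finset.sum_nonneg fun k _ => mul_self_nonneg _
  · intro v hv
    rw [Finset.sum_eq_zero_iff_of_nonneg
      (fun w _ => Finset.sum_nonneg fun k _ => mul_self_nonneg _)] at hv
    have h := hv (wProd C.a []) ((hmem _).2 ⟨[], rfl⟩)
    rw [Finset.sum_eq_zero_iff_of_nonneg (fun k _ => mul_self_nonneg _)] at h
    funext k
    exact mul_self_eq_zero.1 (h k (Finset.mem_univ k))

/-- The exchange property together with positivity of roots. -/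
lemma exchange {n : ℕ} (C : SimpleCartanMatrix n) :
    ∃ d : Fin n → ℚ, (∀ i, 0 < d i) ∧ (∀ i j, d i * C.a i j = d j * C.a j i) ∧
      ∀ (l : List (Fin n)) (i : Fin n),
        wProd C.a l (sroot i) ≠ 0 ∧
        ((∀ k, 0 ≤ wProd C.a l (sroot i) k) ∨
          ∃ l' : List (Fin n), l'.length < l.length + 1 ∧
            wProd C.a l' = wProd C.a (l ++ [i])) := by
  obtain ⟨B, hsymm, hlin, hinv, hnn, hdef⟩ := exists_form C
  have hlin' : ∀ v u x c, B x (v - c • u) = B x v - c * B x u := by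
    intro v u x c; rw [hsymm, hlin, hsymm v, hsymm u]
  have hs0 : ∀ i : Fin n, sroot i ≠ 0 := by
    intro i h
    have := congrFun h i
    simp [sroot] at this
  have hd : ∀ i : Fin n, 0 < B (sroot i) (sroot i) := fun i =>
    lt_of_le_of_ne (hnn _) fun h => hs0 i (hdef _ h.symm)
  -- the pairing through the form
  have hpr : ∀ i v, B (sroot i) (sroot i) * prc C.a i v = 2 * B (sroot i) v := by
    intro i v
    have h := hinv i (sroot i) v
    have hdi : (C.a i i : ℚ) = 2 := by rw [C.diag]; norm_num
    simp only [sRefl_eq, hlin, hlin', prc_sroot, hdi] at h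
    linarith
  have hsym : ∀ i j, B (sroot i) (sroot i) * C.a i j = B (sroot j) (sroot j) * C.a j i := by
    intro i j
    have h1 := hpr i (sroot j)
    have h2 := hpr j (sroot i)
    rw [prc_sroot] at h1 h2
    rw [h1, h2, hsymm]
  have hwinv : ∀ l u v, B (wProd C.a l u) (wProd C.a l v) = B u v := by
    intro l
    induction l with
    | nil => intro u v; rfl
    | cons i l ih => intro u v; rw [wProd_cons]; exact (hinv _ _ _).trans (ih u v)
  -- integrality
  have hint : ∀ l i k, ∃ z : ℤ, wProd C.a l (sroot i) k = z := by
    intro l i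
    induction l with
    | nil =>
      intro k
      by_cases h : k = i
      · exact ⟨1, by subst h; simp [wProd, sroot]⟩
      · exact ⟨0, by simp [wProd, sroot, h]⟩
    | cons j l ih =>
      choose z hz using ih
      intro k
      by_cases h : k = j
      · subst h
        refine ⟨z k - ∑ t, C.a k t * z t, ?_⟩
        simp [wProd_cons_same, prc, hz]
      · exact ⟨z k, by rw [wProd_cons_other _ _ _ h, hz]⟩
  have hint' : ∀ l i k, ∃ z : ℤ, B (sroot k) (sroot k) * wProd C.a l (sroot i) k
      = z * B (sroot i) (sroot i) := by
    intro l i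
    induction l with
    | nil =>
      intro k
      by_cases h : k = i
      · exact ⟨1, by subst h; simp [wProd, sroot]⟩
      · exact ⟨0, by simp [wProd, sroot, h]⟩
    | cons j l ih =>
      choose z hz using ih
      intro k
      by_cases h : k = j
      · subst h
        refine ⟨z k - ∑ t, C.a t k * z t, ?_⟩
        have e : (wProd C.a (k :: l) (sroot i)) k
            = wProd C.a l (sroot i) k - prc C.a k (wProd C.a l (sroot i)) := by
          simp [wProd_cons, sRefl_eq, sroot]
        rw [e, mul_sub, hz k, prc, Finset.mul_sum]
        push_cast
        rw [sub_mul, Finset.sum_mul]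
        congr 1
        refine Finset.sum_congr rfl fun t _ => ?_
        rw [← mul_assoc, hsym k t, mul_right_comm, hz t]
        ring
      · refine ⟨z k, ?_⟩
        rw [← hz k]
        simp [wProd_cons, sRefl_eq, sroot, h]
  refine ⟨fun i => B (sroot i) (sroot i), hd, hsym, ?_⟩
  intro l i
  constructor
  · intro h
    have h1 := hwinv l (sroot i) (sroot i)
    rw [h] at h1
    have h2 : B (0 : Fin n → ℚ) 0 = 0 := by
      have := hlin 0 0 0 1
      simpa using this
    have := hd i
    linarith
  induction l with
  | nil =>
    left
    intro k
    by_cases h : k = i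
    · subst h; simp [wProd, sroot]
    · simp [wProd, sroot, h]
  | cons j l ih =>
    rcases ih with hpos | ⟨l', hl', he⟩
    swap
    · right
      refine ⟨j :: l', by simpa using hl', ?_⟩
      rw [List.cons_append, wProd_cons, wProd_cons, he]
    by_cases hp : ∀ k, 0 ≤ wProd C.a (j :: l) (sroot i) k
    · exact Or.inl hp
    right
    set γ := wProd C.a l (sroot i) with hγ
    have e1 : wProd C.a (j :: l) (sroot i) j = γ j - prc C.a j γ := by
      exact wProd_cons_same _ _ _ _
    have hneg : γ j - prc C.a j γ < 0 := by
      push Not at hp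
      obtain ⟨k, hk⟩ := hp
      by_cases h : k = j
      · subst h; rwa [e1] at hk
      · exfalso
        have : wProd C.a (j :: l) (sroot i) k = γ k := by
          exact wProd_cons_other _ _ _ h _ _
        rw [this] at hk
        exact absurd (hpos k) (not_le.2 hk)
    obtain ⟨c, hc⟩ := hint l i j
    obtain ⟨c', hc'⟩ := hint (j :: l) i j
    obtain ⟨e, he⟩ := hint' l i j
    obtain ⟨e', he'⟩ := hint' (j :: l) i j
    rw [e1] at hc' he'
    rw [← hγ] at hc he
    have hdj := hd j
    have hdi := hd i
    -- the norm computation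
    have hB : B (γ - γ j • sroot j) (γ - γ j • sroot j) = B (sroot i) (sroot i)
        - γ j * (prc C.a j γ - γ j) * B (sroot j) (sroot j) := by
      have h1 := hpr j γ
      have h2 : B γ γ = B (sroot i) (sroot i) := hwinv l _ _
      rw [hlin, hlin', hlin', h2, hsymm γ (sroot j)]
      linear_combination (γ j) * h1
    have hBn := hnn (γ - γ j • sroot j)
    -- positivity of the coefficient
    have hcpos : 0 < γ j := by
      refine lt_of_le_of_ne (hpos j) fun h0 => ?_
      have : prc C.a j γ ≤ 0 := by
        refine Finset.sum_nonpos fun k _ => ?_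
        by_cases h : k = j
        · subst h; rw [← h0]; simp
        · exact mul_nonpos_of_nonpos_of_nonneg
            (by exact_mod_cast C.offdiag_nonpos j k (Ne.symm h)) (hpos k)
      linarith
    have hc1 : (1 : ℚ) ≤ γ j := by
      rw [hc] at hcpos ⊢
      have : 0 < c := by exact_mod_cast hcpos
      exact_mod_cast this
    have hc1' : (1 : ℚ) ≤ prc C.a j γ - γ j := by
      rw [hc'] at hneg
      have h1 : c' < 0 := by exact_mod_cast hneg
      have h2 : c' ≤ -1 := by omega
      have h3 : (c' : ℚ) ≤ -1 := by exact_mod_cast h2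
      linarith
    have he1 : B (sroot i) (sroot i) ≤ B (sroot j) (sroot j) * γ j := by
      have h0 : 0 < (e : ℚ) * B (sroot i) (sroot i) := by rw [← he]; positivity
      have h1 : 0 < (e : ℚ) := pos_of_mul_pos_left h0 hdi.le
      have h2 : 0 < e := by exact_mod_cast h1
      have h3 : (1 : ℚ) ≤ e := by exact_mod_cast h2
      rw [he]; nlinarith
    have he1' : B (sroot i) (sroot i) ≤ B (sroot j) (sroot j) * (prc C.a j γ - γ j) := by
      have h0 : (e' : ℚ) * B (sroot i) (sroot i) < 0 := by rw [← he']; nlinarith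
      have h1 : (e' : ℚ) < 0 := by
        by_contra hcon
        push Not at hcon
        nlinarith
      have h2 : e' < 0 := by exact_mod_cast h1
      have h4 : e' ≤ -1 := by omega
      have h3 : (e' : ℚ) ≤ -1 := by exact_mod_cast h4
      nlinarith
    set di := B (sroot i) (sroot i) with hdi_def
    set dj := B (sroot j) (sroot j) with hdj_def
    set p := prc C.a j γ - γ j with hp_def
    have hle : γ j * p * dj ≤ di := by linarith
    have hpj : p ≤ γ j * p := by nlinarith
    have hjp : γ j ≤ γ j * p := by nlinarith
    have hdd : dj ≤ di := by nlinarith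
    have hp1 : p = 1 := by
      by_contra hne
      have hlt : 1 < p := lt_of_le_of_ne hc1' (Ne.symm hne)
      nlinarith [mul_lt_mul_of_pos_left hlt (mul_pos hcpos hdj)]
    have hj1 : γ j = 1 := by
      by_contra hne
      have hlt : 1 < γ j := lt_of_le_of_ne hc1 (Ne.symm hne)
      nlinarith [mul_lt_mul_of_pos_left hlt hdj]
    have hdeq : di = dj := by
      rw [hj1] at he1
      linarith
    have hγj : γ = sroot j := by
      have h0 := hdef (γ - γ j • sroot j) (by rw [hB, hp1, hj1, hdeq]; ring)
      rw [hj1, one_smul] at h0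
      exact sub_eq_zero.1 h0
    refine ⟨l, by simp, ?_⟩
    rw [List.cons_append, wProd_cons, wProd_append]
    funext v
    have h1 : wProd C.a [i] v = v - prc C.a i v • sroot i := rfl
    have h2 : prc C.a j (wProd C.a l v) = prc C.a i v := by
      have h3 := hpr j (wProd C.a l v)
      have h4 := hpr i v
      rw [← hγj, hγ, hwinv, hwinv, ← h4] at h3
      exact mul_left_cancel₀ hdi.ne' h3
    simp only [Function.comp_apply]
    rw [h1, wProd_sub_smul, ← hγ, hγj, sRefl_sub_smul, sRefl_eq, sRefl_eq, h2, prc_sroot, C.diag]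
    push_cast
    module

/-- Weight coordinates along the word. -/
def wtSeq {n N : ℕ} (a : Fin n → Fin n → ℤ) (ι : Fin N → Fin n) : ℕ → Fin n → ℤ
  | 0 => fun _ => 1
  | k + 1 => fun i =>
      if h : k < N then wtSeq a ι k i - a i (ι ⟨k, h⟩) * wtSeq a ι k (ι ⟨k, h⟩)
      else wtSeq a ι k i

/-- The positive element of `ℋ_ι`. -/
def hvec {n N : ℕ} (a : Fin n → Fin n → ℤ) (ι : Fin N → Fin n) (k : Fin N) : ℤ :=
  wtSeq a ι k (ι k)

lemma wtSeq_eq {n N : ℕ} (a : Fin n → Fin n → ℤ) (ι : Fin N → Fin n) (i : Fin n) (p : ℕ)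
    (hp : p ≤ N) : wtSeq a ι p i
      = 1 - ∑ j ∈ Finset.univ.filter (fun j : Fin N => (j : ℕ) < p), a i (ι j) * hvec a ι j := by
  induction p with
  | zero => simp [wtSeq]
  | succ p ih =>
    have h : p < N := hp
    have hset : Finset.univ.filter (fun j : Fin N => (j : ℕ) < p + 1)
        = insert ⟨p, h⟩ (Finset.univ.filter (fun j : Fin N => (j : ℕ) < p)) := by
      ext j
      simp only [Finset.mem_filter, Finset.mem_univ, true_and, Finset.mem_insert, Fin.ext_iff]
      omega
    rw [hset, Finset.sum_insert (by simp)]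
    simp only [wtSeq, h, dif_pos]
    rw [ih h.le]
    simp only [hvec]
    ring

lemma hvec_mem {n N : ℕ} (C : SimpleCartanMatrix n) (ι : Fin N → Fin n) :
    hvec C.a ι ∈ Hset C.a ι := by
  intro k ⟨l, hl⟩
  have hne : (Finset.univ.filter (fun l => k < l ∧ ι l = ι k)).Nonempty :=
    ⟨l, by simpa using hl⟩
  rw [betaFn, dif_pos hne]
  set q := (Finset.univ.filter (fun l => k < l ∧ ι l = ι k)).min' hne with hq
  have hqm : k < q ∧ ι q = ι k := by
    have := Finset.min'_mem _ hne
    rw [← hq] at this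
    simpa using this
  have h1 : hvec C.a ι k = _ := wtSeq_eq C.a ι (ι k) k k.2.le
  have h2 : hvec C.a ι q = _ := wtSeq_eq C.a ι (ι q) q q.2.le
  rw [hqm.2] at h2
  have hset : Finset.univ.filter (fun j : Fin N => (j : ℕ) < q)
      = Finset.univ.filter (fun j : Fin N => (j : ℕ) < k) ∪
        insert k (Finset.univ.filter (fun j => k < j ∧ j < q)) := by
    ext j
    have := hqm.1
    simp only [Finset.mem_filter, Finset.mem_univ, true_and, Finset.mem_insert, Fin.ext_iff,
      Finset.mem_union, Fin.lt_def] at this ⊢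
    omega
  have hdisj : Disjoint (Finset.univ.filter (fun j : Fin N => (j : ℕ) < k))
      (insert k (Finset.univ.filter (fun j => k < j ∧ j < q))) := by
    rw [Finset.disjoint_left]
    intro j
    simp only [Finset.mem_filter, Finset.mem_univ, true_and, Finset.mem_insert, Fin.ext_iff,
      Fin.lt_def]
    omega
  rw [hset, Finset.sum_union hdisj, Finset.sum_insert (by simp), C.diag] at h2
  linarith

lemma hvec_pos {n N : ℕ} (C : SimpleCartanMatrix n) (ι : Fin N → Fin n)
    (hred : IsReducedList C.a (List.ofFn ι)) (k : Fin N) : 0 < hvec C.a ι k := by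
  obtain ⟨d, hd, hsym, hex⟩ := exchange C
  have hf : ∀ p : ℕ, p ≤ N → ∀ v : Fin n → ℚ, ∑ j, d j * wtSeq C.a ι p j * v j
      = ∑ j, d j * wProd C.a ((List.ofFn ι).take p) v j := by
    intro p
    induction p with
    | zero => intro _ v; simp [wtSeq, wProd]
    | succ p ih =>
      intro hp v
      have h : p < N := hp
      have ht : (List.ofFn ι).take (p + 1) = (List.ofFn ι).take p ++ [ι ⟨p, h⟩] := by
        rw [List.take_succ_eq_append_getElem (by simpa using h)]
        simp
      rw [ht, wProd_append, Function.comp_apply, ← ih h.le]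
      have h1 : wProd C.a [ι ⟨p, h⟩] v = v - prc C.a (ι ⟨p, h⟩) v • sroot (ι ⟨p, h⟩) := rfl
      rw [h1]
      simp only [wtSeq, h, dif_pos, Pi.sub_apply, Pi.smul_apply, smul_eq_mul, mul_sub,
        Finset.sum_sub_distrib]
      push_cast
      simp only [mul_sub, sub_mul, Finset.sum_sub_distrib]
      congr 1
      have h2 : ∑ x, d x * (wtSeq C.a ι p x : ℚ) *
          (prc C.a (ι ⟨p, h⟩) v * sroot (ι ⟨p, h⟩) x)
          = d (ι ⟨p, h⟩) * (wtSeq C.a ι p (ι ⟨p, h⟩) : ℚ) * prc C.a (ι ⟨p, h⟩) v := by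
        simp [sroot, Pi.single_apply]
      rw [h2, prc, Finset.mul_sum]
      refine Finset.sum_congr rfl fun x _ => ?_
      have := hsym x (ι ⟨p, h⟩)
      linear_combination (wtSeq C.a ι p (ι ⟨p, h⟩) : ℚ) * v x * this
  have h1 := hf k k.2.le (sroot (ι k))
  have h2 : ∑ j, d j * (wtSeq C.a ι k j : ℚ) * sroot (ι k) j = d (ι k) * hvec C.a ι k := by
    simp [sroot, Pi.single_apply, hvec]
  rw [h2] at h1
  obtain ⟨hne, hpos⟩ := hex ((List.ofFn ι).take k) (ι k)
  have hlist : (List.ofFn ι).take k ++ [ι k] ++ (List.ofFn ι).drop (k + 1) = List.ofFn ι := by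
    have ht : (List.ofFn ι).take (k + 1) = (List.ofFn ι).take k ++ [ι k] := by
      rw [List.take_succ_eq_append_getElem (by simp)]
      simp
    rw [← ht, List.take_append_drop]
  have hpos' : ∀ j, 0 ≤ wProd C.a ((List.ofFn ι).take k) (sroot (ι k)) j := by
    rcases hpos with hpos | ⟨l', hl', he⟩
    · exact hpos
    · exfalso
      have h3 := hred (l' ++ (List.ofFn ι).drop (k + 1)) (by
        rw [wProd_append, he, ← wProd_append, hlist])
      have h4 := congrArg List.length hlist
      simp only [List.length_append, List.length_singleton] at h3 h4
      omega
  have hsum : 0 < ∑ j, d j * wProd C.a ((List.ofFn ι).take k) (sroot (ι k)) j := by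
    obtain ⟨j, hj⟩ := Function.ne_iff.1 hne
    exact Finset.sum_pos' (fun j _ => mul_nonneg (hd j).le (hpos' j))
      ⟨j, Finset.mem_univ j, mul_pos (hd j) (lt_of_le_of_ne (hpos' j) (Ne.symm hj))⟩
  rw [← h1] at hsum
  have := pos_of_mul_pos_right hsum (hd _).le
  exact_mod_cast this

lemma betaFn_sub_smul {n N : ℕ} (a : Fin n → Fin n → ℤ) (ι : Fin N → Fin n) (k : Fin N)
    (x h : Fin N → ℤ) (m : ℤ) :
    betaFn a ι k (x + m • h) = betaFn a ι k x + m * betaFn a ι k h := by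
  unfold betaFn
  split_ifs with hne
  · simp only [Pi.add_apply, Pi.smul_apply, smul_eq_mul, mul_add, Finset.sum_add_distrib,
      Finset.mul_sum, mul_left_comm m]
    ring
  · simp

/-- Every `x ∈ ℤ^N` can be written as `x = H + y` with
`H ∈ ℋ_ι` and `y ∈ B_Ξ`. -/
theorem union_of_translates_covers {n N : ℕ} (C : SimpleCartanMatrix n)
    (ι : Fin N → Fin n) (hlong : IsLongestWord C.a (List.ofFn ι))
    {F : Type*} [Fintype F] (kphi : F → Fin N) (c : F → Fin N → ℤ) :
    ∀ x : Fin N → ℤ, ∃ H ∈ Hset C.a ι,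
      ∃ y ∈ {y : Fin N → ℤ | ∀ f : F, 0 ≤ xiForm C.a ι (kphi f) (c f) y},
        x = H + y := by
  intro x
  have hmem := hvec_mem C ι
  have hpos := hvec_pos C ι hlong.1
  set h := hvec C.a ι with hh
  set m : ℤ := ∑ f, |xiForm C.a ι (kphi f) (c f) x| with hm
  have hm0 : 0 ≤ m := Finset.sum_nonneg fun _ _ => abs_nonneg _
  refine ⟨(-m) • h, ?_, x + m • h, ?_, ?_⟩
  · intro k hk
    have h0 := betaFn_sub_smul C.a ι k 0 h (-m)
    have h1 := betaFn_sub_smul C.a ι k 0 0 1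
    simp only [zero_add, smul_zero] at h0 h1
    rw [h0, hmem k hk]
    linarith
  · intro f
    have e : xiForm C.a ι (kphi f) (c f) (x + m • h)
        = xiForm C.a ι (kphi f) (c f) x + m * h (kphi f) := by
      have hs : ∑ j ∈ Finset.univ.filter (fun j => ∃ l, j < l ∧ ι l = ι j),
          c f j * betaFn C.a ι j (x + m • h)
          = ∑ j ∈ Finset.univ.filter (fun j => ∃ l, j < l ∧ ι l = ι j),
          c f j * betaFn C.a ι j x := by
        refine Finset.sum_congr rfl fun j hj => ?_
        rw [betaFn_sub_smul, hmem j (Finset.mem_filter.1 hj).2]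
        ring
      unfold xiForm
      rw [hs]
      simp only [Pi.add_apply, Pi.smul_apply, smul_eq_mul]
      ring
    rw [e]
    have h1 : |xiForm C.a ι (kphi f) (c f) x| ≤ m :=
      Finset.single_le_sum (f := fun f => |xiForm C.a ι (kphi f) (c f) x|)
        (fun _ _ => abs_nonneg _) (Finset.mem_univ f)
    have h2 := neg_abs_le (xiForm C.a ι (kphi f) (c f) x)
    have h3 := hpos (kphi f)
    nlinarith
  · funext k
    simp
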